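/- Let n, d, k be positive integers, X ∈ ℝ^{n×d}, and let p₁, p₂, q₁, q₂ ∈ [1,∞] with p₂ ≤ q₂, and let p₁' ∈ [1,∞] be the Hölder conjugate of p₁ (1/p₁ + 1/p₁' = 1). Then sup{ Σ_{i=1}^d ‖X(:,i)‖_{q₁} · ‖U(i,:)‖_{q₂} : U ∈ ℝ^{d×k}, ‖U‖_{p₁×p₂} ≤ 1 } = ‖Xᵀ‖_{p₁'×q₁}, where ‖Xᵀ‖_{p₁'×q₁} = ( Σ_{i=1}^d ‖X(:,i)‖_{q₁}^{p₁'} )^{1/p₁'} (sup convention for p₁' = ∞), and the supremum is attained. -/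

import Mathlib

open scoped ENNReal BigOperators
open Matrix

/-- The `ℓ_p` norm of a finitely-indexed real vector, `p ∈ [1,∞]`
(with the sup convention for `p = ∞`). -/
noncomputable def lpNorm {ι : Type*} [Fintype ι] (p : ℝ≥0∞) (v : ι → ℝ) : ℝ :=
  if p = ∞ then ⨆ i, |v i| else (∑ i, |v i| ^ p.toReal) ^ (1 / p.toReal)

/-- The mixed norm `‖A‖_{p×q}`: the `ℓ_p` norm of the vector of `ℓ_q` norms of the rows. -/
noncomputable def mixedNorm {ι κ : Type*} [Fintype ι] [Fintype κ]
    (p q : ℝ≥0∞) (A : Matrix ι κ ℝ) : ℝ :=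
  lpNorm p (fun i => lpNorm q (A i))

/-!
Since the `ℓ_q` norms decrease in `q`, replacing `‖U(i,:)‖_{q₂}` by `‖U(i,:)‖_{p₂}` only increases
the weighted sum, and Hölder's inequality for the exponents `p₁`, `p₁'` bounds the result by the
`ℓ_{p₁'}` norm of the weights. A vector with a single nonzero entry has the same `ℓ_q` norm for
every `q`, so nothing is lost in the first step when `U` is supported on one column; placing there
a nonnegative extremal vector for the `ℓ_{p₁}`-`ℓ_{p₁'}` duality attains the bound.
-/

section LpNorm

variable {ι : Type*} [Fintype ι] {p q : ℝ≥0∞}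

lemma lpNorm_nonneg (p : ℝ≥0∞) (v : ι → ℝ) : 0 ≤ lpNorm p v := by
  unfold lpNorm
  split_ifs
  · exact Real.iSup_nonneg fun i => abs_nonneg (v i)
  · positivity

lemma lpNorm_top (v : ι → ℝ) : lpNorm ∞ v = ⨆ i, |v i| := if_pos rfl

lemma lpNorm_of_ne_top (hp : p ≠ ∞) (v : ι → ℝ) :
    lpNorm p v = (∑ i, |v i| ^ p.toReal) ^ (1 / p.toReal) := if_neg hp

lemma lpNorm_one (v : ι → ℝ) : lpNorm 1 v = ∑ i, |v i| := by
  simp [lpNorm_of_ne_top]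

lemma lpNorm_abs (p : ℝ≥0∞) (v : ι → ℝ) : lpNorm p (fun i => |v i|) = lpNorm p v := by
  simp only [lpNorm, abs_abs]

lemma lpNorm_rpow_toReal (hp : 0 < p) (hp_top : p ≠ ∞) (v : ι → ℝ) :
    lpNorm p v ^ p.toReal = ∑ i, |v i| ^ p.toReal := by
  rw [lpNorm_of_ne_top hp_top, one_div,
    Real.rpow_inv_rpow (by positivity) (ENNReal.toReal_pos hp.ne' hp_top).ne']

lemma abs_apply_le_lpNorm (hp : 0 < p) (v : ι → ℝ) (i : ι) : |v i| ≤ lpNorm p v := by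
  obtain rfl | hp_top := eq_or_ne p ∞
  · rw [lpNorm_top]
    exact Finite.le_ciSup (fun i => |v i|) i
  · rw [← Real.rpow_le_rpow_iff (abs_nonneg _) (lpNorm_nonneg p v)
      (ENNReal.toReal_pos hp.ne' hp_top), lpNorm_rpow_toReal hp hp_top]
    exact Finset.single_le_sum (f := fun i => |v i| ^ p.toReal)
      (fun i _ => by positivity) (Finset.mem_univ i)

lemma lpNorm_le_lpNorm_of_exponent_le (hp : 0 < p) (hpq : p ≤ q) (v : ι → ℝ) :
    lpNorm q v ≤ lpNorm p v := by
  obtain rfl | hq_top := eq_or_ne q ∞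
  · rw [lpNorm_top]
    exact Real.iSup_le (abs_apply_le_lpNorm hp v) (lpNorm_nonneg p v)
  have hp_top : p ≠ ∞ := ne_top_of_le_ne_top hq_top hpq
  have hp_pos : 0 < p.toReal := ENNReal.toReal_pos hp.ne' hp_top
  have hpq_real : p.toReal ≤ q.toReal := ENNReal.toReal_mono hq_top hpq
  have rpow_split (x : ℝ) (hx : 0 ≤ x) :
      x ^ q.toReal = x ^ p.toReal * x ^ (q.toReal - p.toReal) := by
    rw [← Real.rpow_add_of_nonneg hx hp_pos.le (sub_nonneg.2 hpq_real), add_sub_cancel]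
  rw [← Real.rpow_le_rpow_iff (lpNorm_nonneg q v) (lpNorm_nonneg p v)
    (hp_pos.trans_le hpq_real)]
  calc lpNorm q v ^ q.toReal
      = ∑ i, |v i| ^ p.toReal * |v i| ^ (q.toReal - p.toReal) := by
        rw [lpNorm_rpow_toReal (hp.trans_le hpq) hq_top]
        exact Finset.sum_congr rfl fun i _ => rpow_split _ (abs_nonneg _)
    _ ≤ ∑ i, |v i| ^ p.toReal * lpNorm p v ^ (q.toReal - p.toReal) := by
        gcongr with i
        exact abs_apply_le_lpNorm hp v i
    _ = lpNorm p v ^ q.toReal := by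
        rw [← Finset.sum_mul, ← lpNorm_rpow_toReal hp hp_top,
          ← rpow_split _ (lpNorm_nonneg p v)]

lemma lpNorm_single [DecidableEq ι] (hp : 0 < p) (i : ι) (x : ℝ) :
    lpNorm p (Pi.single i x) = |x| := by
  refine le_antisymm ?_ (by simpa using abs_apply_le_lpNorm hp (Pi.single i x : ι → ℝ) i)
  have apply_of_ne (j : ι) (hj : j ≠ i) : (Pi.single i x : ι → ℝ) j = 0 := by
    simp [hj]
  obtain rfl | hp_top := eq_or_ne p ∞
  · rw [lpNorm_top]
    refine Real.iSup_le (fun j => ?_) (abs_nonneg x)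
    obtain rfl | hj := eq_or_ne j i
    · simp
    · simp [apply_of_ne j hj]
  · have hp_ne : p.toReal ≠ 0 := (ENNReal.toReal_pos hp.ne' hp_top).ne'
    rw [lpNorm_of_ne_top hp_top, Fintype.sum_eq_single i fun j hj => by
      rw [apply_of_ne j hj, abs_zero, Real.zero_rpow hp_ne], Pi.single_eq_same, one_div,
      Real.rpow_rpow_inv (abs_nonneg x) hp_ne]

lemma sum_mul_le_lpNorm_top_mul_lpNorm_one (a b : ι → ℝ) :
    ∑ i, a i * b i ≤ lpNorm ∞ a * lpNorm 1 b := by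
  rw [lpNorm_one, Finset.mul_sum]
  gcongr ∑ i, ?_ with i
  calc a i * b i ≤ |a i| * |b i| := (le_abs_self _).trans_eq (abs_mul _ _)
    _ ≤ lpNorm ∞ a * |b i| := by
        gcongr
        exact abs_apply_le_lpNorm ENNReal.zero_lt_top a i

lemma sum_mul_le_lpNorm_mul_lpNorm [p.HolderConjugate q] (a b : ι → ℝ) :
    ∑ i, a i * b i ≤ lpNorm p a * lpNorm q b := by
  obtain rfl | hp_top := eq_or_ne p ∞
  · obtain rfl : q = 1 := ENNReal.HolderConjugate.unique ∞ q 1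
    exact sum_mul_le_lpNorm_top_mul_lpNorm_one a b
  obtain rfl | hq_top := eq_or_ne q ∞
  · obtain rfl : p = 1 := ENNReal.HolderConjugate.unique ∞ p 1
    simpa only [mul_comm] using sum_mul_le_lpNorm_top_mul_lpNorm_one b a
  rw [lpNorm_of_ne_top hp_top, lpNorm_of_ne_top hq_top]
  exact Real.inner_le_Lp_mul_Lq _ a b
    (ENNReal.HolderConjugate.toReal_of_ne_top hp_top hq_top)

lemma exists_lpNorm_one_le_one_sum_eq_lpNorm_top (a : ι → ℝ) :
    ∃ b : ι → ℝ, (∀ i, 0 ≤ b i) ∧ lpNorm 1 b ≤ 1 ∧ ∑ i, |a i| * b i = lpNorm ∞ a := by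
  classical
  obtain _ | _ := isEmpty_or_nonempty ι
  · exact ⟨0, fun _ => le_rfl, by simp [lpNorm_one], by simp [lpNorm_top]⟩
  obtain ⟨i, hi⟩ := exists_eq_ciSup_of_finite (f := fun i => |a i|)
  have single_nonneg : (0 : ι → ℝ) ≤ Pi.single i 1 := Pi.single_nonneg.2 zero_le_one
  refine ⟨Pi.single i 1, single_nonneg, ?_, ?_⟩
  · rw [lpNorm_single zero_lt_one, abs_one]
  · rw [lpNorm_top, ← hi]
    simp [Pi.single_apply]

lemma exists_lpNorm_top_le_one_sum_eq_lpNorm_one (a : ι → ℝ) :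
    ∃ b : ι → ℝ, (∀ i, 0 ≤ b i) ∧ lpNorm ∞ b ≤ 1 ∧ ∑ i, |a i| * b i = lpNorm 1 a := by
  refine ⟨1, fun _ => zero_le_one, ?_, by simp [lpNorm_one]⟩
  rw [lpNorm_top]
  exact Real.iSup_le (fun _ => by simp) zero_le_one

lemma exists_lpNorm_le_one_sum_eq_lpNorm [p.HolderConjugate q] (a : ι → ℝ) :
    ∃ b : ι → ℝ, (∀ i, 0 ≤ b i) ∧ lpNorm p b ≤ 1 ∧ ∑ i, |a i| * b i = lpNorm q a := by
  obtain rfl | hp_top := eq_or_ne p ∞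
  · obtain rfl : q = 1 := ENNReal.HolderConjugate.unique ∞ q 1
    exact exists_lpNorm_top_le_one_sum_eq_lpNorm_one a
  obtain rfl | hq_top := eq_or_ne q ∞
  · obtain rfl : p = 1 := ENNReal.HolderConjugate.unique ∞ p 1
    exact exists_lpNorm_one_le_one_sum_eq_lpNorm_top a
  obtain ⟨⟨b, hb, hab⟩, -⟩ := NNReal.isGreatest_Lp Finset.univ (fun i => Real.nnabs (a i))
    (ENNReal.HolderConjugate.toReal_of_ne_top hq_top hp_top)
  refine ⟨fun i => b i, fun i => (b i).coe_nonneg, ?_, ?_⟩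
  · have sum_rpow_le_one : ∑ i, (b i : ℝ) ^ p.toReal ≤ 1 := mod_cast hb
    simp only [lpNorm_of_ne_top hp_top, NNReal.abs_eq]
    exact Real.rpow_le_one (by positivity) sum_rpow_le_one (by positivity)
  · rw [lpNorm_of_ne_top hq_top]
    simpa using congrArg NNReal.toReal hab

end LpNorm

section MixedNorm

variable {ι κ : Type*} [Fintype ι] [Fintype κ] {p q r s : ℝ≥0∞}

lemma mixedNorm_single [DecidableEq κ] (p : ℝ≥0∞) (hq : 0 < q) (j : κ) (b : ι → ℝ) :
    mixedNorm p q (fun i => Pi.single j (b i)) = lpNorm p b := by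
  simp only [mixedNorm, lpNorm_single hq, lpNorm_abs]

lemma sum_mul_lpNorm_le_lpNorm_mul_mixedNorm [p.HolderConjugate s] (hq : 0 < q) (hqr : q ≤ r)
    {a : ι → ℝ} (ha : ∀ i, 0 ≤ a i) (U : Matrix ι κ ℝ) :
    ∑ i, a i * lpNorm r (U i) ≤ lpNorm s a * mixedNorm p q U :=
  calc ∑ i, a i * lpNorm r (U i)
      ≤ ∑ i, a i * lpNorm q (U i) := by
        gcongr with i
        exacts [ha i, lpNorm_le_lpNorm_of_exponent_le hq hqr (U i)]
    _ ≤ lpNorm s a * mixedNorm p q U := sum_mul_le_lpNorm_mul_lpNorm a _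

end MixedNorm

theorem sup_weighted_row_norms_eq_mixedNorm_transpose_general
    {ι κ : Type*} [Fintype ι] [Fintype κ] [Nonempty κ] {p₁ p₂ q₂ p₁' : ℝ≥0∞}
    [p₁.HolderConjugate p₁'] (hp₂ : 0 < p₂) (hle : p₂ ≤ q₂) {a : ι → ℝ} (ha : ∀ i, 0 ≤ a i) :
    IsGreatest
      {r : ℝ | ∃ U : Matrix ι κ ℝ, mixedNorm p₁ p₂ U ≤ 1 ∧ r = ∑ i, a i * lpNorm q₂ (U i)}
      (lpNorm p₁' a) := by
  classical
  constructor
  · obtain ⟨b, hb, hb_le, hab⟩ := exists_lpNorm_le_one_sum_eq_lpNorm (p := p₁) (q := p₁') a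
    let j : κ := Classical.arbitrary κ
    refine ⟨fun i => Pi.single j (b i), (mixedNorm_single p₁ hp₂ j b).trans_le hb_le, ?_⟩
    simp only [← hab, lpNorm_single (hp₂.trans_le hle), abs_of_nonneg (ha _),
      abs_of_nonneg (hb _)]
  · rintro _ ⟨U, hU, rfl⟩
    exact (sum_mul_lpNorm_le_lpNorm_mul_mixedNorm hp₂ hle ha U).trans
      (mul_le_of_le_one_right (lpNorm_nonneg p₁' a) hU)

/-- Lemma "lemma_variance_U": if `p₂ ≤ q₂` and `p₁'` is the Hölder conjugate of `p₁`, then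
`sup { Σ_i ‖X(:,i)‖_{q₁}·‖U(i,:)‖_{q₂} : ‖U‖_{p₁×p₂} ≤ 1 } = ‖Xᵀ‖_{p₁'×q₁}`,
the supremum being attained. -/
theorem sup_weighted_row_norms_eq_mixedNorm_transpose
    (n d k : ℕ) (hn : 0 < n) (hd : 0 < d) (hk : 0 < k)
    (X : Matrix (Fin n) (Fin d) ℝ)
    (p₁ p₂ q₁ q₂ p₁' : ℝ≥0∞)
    (hp₁ : 1 ≤ p₁) (hp₂ : 1 ≤ p₂) (hq₁ : 1 ≤ q₁) (hq₂ : 1 ≤ q₂) (hp₁' : 1 ≤ p₁')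
    (hconj : 1 / p₁ + 1 / p₁' = 1) (hle : p₂ ≤ q₂) :
    IsGreatest
      {r : ℝ | ∃ U : Matrix (Fin d) (Fin k) ℝ, mixedNorm p₁ p₂ U ≤ 1 ∧
        r = ∑ i : Fin d, lpNorm q₁ (fun l => X l i) * lpNorm q₂ (U i)}
      (mixedNorm p₁' q₁ Xᵀ) ∧
    mixedNorm p₁' q₁ Xᵀ = lpNorm p₁' (fun i : Fin d => lpNorm q₁ (fun l => X l i)) := by
  have : Nonempty (Fin k) := ⟨⟨0, hk⟩⟩
  have : p₁.HolderConjugate p₁' := ENNReal.holderConjugate_iff.2 (by simpa using hconj)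
  exact ⟨sup_weighted_row_norms_eq_mixedNorm_transpose_general (zero_lt_one.trans_le hp₂) hle
    fun i => lpNorm_nonneg q₁ _, rfl⟩
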